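/- Let d ≥ 2 be an even integer and n = d + 2. Then the set Σ = {(α, λ) ∈ ℂ^{d−1} × ℂ : there exists a nonzero solution of the Schrödinger equation with parameters (α, λ) that is subdominant in each of the n/2 sectors S₀, S₂, S₄, …, S_{n−2}} is disconnected, i.e., Σ is not a preconnected subset of ℂ^{d−1} × ℂ. -/

import Mathlib

open Complex Filter Topology

/-- The polynomial potential `P_α(z) = z^d + α_{d-1} z^{d-1} + ⋯ + α₁ z`. -/
noncomputable def Pol (d : ℕ) (α : Fin (d - 1) → ℂ) (z : ℂ) : ℂ :=
  z ^ d + ∑ i : Fin (d - 1), α i * z ^ ((i : ℕ) + 1)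

/-- `y` is an (entire) solution of the Schrödinger equation `y'' = (P_α - λ) y`. -/
def IsSol (d : ℕ) (α : Fin (d - 1) → ℂ) (lam : ℂ) (y : ℂ → ℂ) : Prop :=
  Differentiable ℂ y ∧ ∀ z : ℂ, deriv (deriv y) z = (Pol d α z - lam) * y z

/-- `θ` is a ray direction of the Stokes sector `S_j`. -/
def DirIn (n j : ℕ) (θ : ℝ) : Prop :=
  |θ - 2 * Real.pi * j / n| < Real.pi / n

/-- `y` is subdominant in the Stokes sector `S_j`: it tends to `0` along every ray in `S_j`. -/
def Subdominant (n j : ℕ) (y : ℂ → ℂ) : Prop :=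
  ∀ θ : ℝ, DirIn n j θ →
    Tendsto (fun r : ℝ => y ((r : ℂ) * Complex.exp (θ * Complex.I))) atTop (𝓝 0)

theorem hasDerivAt_norm_sq {f : ℝ → ℂ} {f' : ℂ} {t : ℝ} (hf : HasDerivAt f f' t) :
    HasDerivAt (fun s => ‖f s‖ ^ 2) (2 * (f' * (starRingEnd ℂ) (f t)).re) t := by
  have := hf.norm_sq
  rwa [Complex.inner] at this

theorem abs_re_mul_conj_le (a b : ℂ) : |(a * (starRingEnd ℂ) b).re| ≤ ‖a‖ * ‖b‖ := by
  simpa using Complex.abs_re_le_norm (a * (starRingEnd ℂ) b)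

/-- If `t E'(t) ≤ N E(t)` for large `t`, then `E` grows at most like `t ^ N`. -/
theorem exists_le_mul_pow_of_deriv_le {E E' : ℝ → ℝ} {N : ℕ}
    (hE : ∀ᶠ t in atTop, HasDerivAt E (E' t) t) (h : ∀ᶠ t in atTop, t * E' t ≤ N * E t) :
    ∃ K, ∀ᶠ t in atTop, E t ≤ K * t ^ N := by
  obtain ⟨t₀, ht₀⟩ := eventually_atTop.1 (hE.and (h.and (eventually_gt_atTop (0 : ℝ))))
  refine ⟨E t₀ / t₀ ^ N, ?_⟩
  filter_upwards [eventually_ge_atTop t₀] with t ht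
  have hd : ∀ s ∈ Set.Ici t₀, HasDerivAt (fun s => E s / s ^ N)
      ((E' s * s ^ N - E s * (N * s ^ (N - 1))) / (s ^ N) ^ 2) s := fun s hs =>
    (ht₀ s hs).1.div (hasDerivAt_pow N s) (pow_pos (ht₀ s hs).2.2 N).ne'
  have hanti : AntitoneOn (fun s => E s / s ^ N) (Set.Ici t₀) := by
    refine antitoneOn_of_deriv_nonpos (convex_Ici t₀)
      (fun s hs => (hd s hs).continuousAt.continuousWithinAt)
      (fun s hs => (hd s (interior_subset hs)).differentiableAt.differentiableWithinAt)
      fun s hs => ?_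
    obtain ⟨-, h1, h2⟩ := ht₀ s (interior_subset hs)
    rw [(hd s (interior_subset hs)).deriv]
    refine div_nonpos_of_nonpos_of_nonneg ?_ (by positivity)
    rcases N with _ | N
    · simp at h1 ⊢; nlinarith
    · have : E' s * s ^ (N + 1) - E s * (((N + 1 : ℕ) : ℝ) * s ^ (N + 1 - 1))
          = (s * E' s - (N + 1 : ℕ) * E s) * s ^ N := by simp; ring
      rw [this]
      exact mul_nonpos_of_nonpos_of_nonneg (by linarith) (by positivity)
  have := hanti Set.self_mem_Ici ht ht
  have htp := (ht₀ t ht).2.2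
  exact (div_le_iff₀ (by positivity)).1 this

/-- If `f' ≤ g'` for large `t`, then `f ≤ g + K` for large `t`. -/
theorem exists_le_add_of_deriv_le {f f' g g' : ℝ → ℝ}
    (hf : ∀ᶠ t in atTop, HasDerivAt f (f' t) t) (hg : ∀ᶠ t in atTop, HasDerivAt g (g' t) t)
    (h : ∀ᶠ t in atTop, f' t ≤ g' t) : ∃ K, ∀ᶠ t in atTop, f t ≤ g t + K := by
  obtain ⟨K, hK⟩ := exists_le_mul_pow_of_deriv_le (N := 0) (E := fun t => f t - g t)
    (E' := fun t => f' t - g' t) (by filter_upwards [hf, hg] with t h1 h2 using h1.sub h2)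
    (by filter_upwards [h, eventually_ge_atTop 0] with t h1 h2; simp; nlinarith)
  exact ⟨K, hK.mono fun t ht => by simp at ht; linarith⟩

/-- Solutions of a damped equation `U'' = 2 Q U' + S U` have at most polynomial growth. -/
theorem exists_norm_le_pow_of_damped {U V Q S : ℝ → ℂ} {c C : ℝ} {k : ℕ} (hc : 0 < c)
    (hU : ∀ t, HasDerivAt U (V t) t)
    (hV : ∀ t, HasDerivAt V (2 * Q t * V t + S t * U t) t)
    (hQ : ∀ᶠ t in atTop, (Q t).re ≤ -c * t ^ (k + 1))
    (hS : ∀ᶠ t in atTop, ‖S t‖ ≤ C * t ^ k) :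
    ∃ (K : ℝ) (N : ℕ), ∀ᶠ t in atTop, ‖U t‖ ^ 2 ≤ K * t ^ N := by
  obtain ⟨N, hN⟩ := exists_nat_ge (k + (1 + C) ^ 2 / (4 * c))
  obtain ⟨K, hK⟩ := exists_le_mul_pow_of_deriv_le (N := N)
    (E := fun t => t ^ k * ‖U t‖ ^ 2 + ‖V t‖ ^ 2) (E' := fun t => (k * t ^ (k - 1)) * ‖U t‖ ^ 2
      + t ^ k * (2 * (V t * (starRingEnd ℂ) (U t)).re)
      + 2 * ((2 * Q t * V t + S t * U t) * (starRingEnd ℂ) (V t)).re)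
    (.of_forall fun t => ((hasDerivAt_pow k t).mul (hasDerivAt_norm_sq (hU t))).add
      (hasDerivAt_norm_sq (hV t))) (by
      filter_upwards [hQ, hS, eventually_ge_atTop 1] with t hQ hS ht
      have e1 : t * (k * t ^ (k - 1)) = k * t ^ k := by
        rcases k with _ | k
        · simp
        · simp; ring
      have e2 : ((2 * Q t * V t + S t * U t) * (starRingEnd ℂ) (V t)).re
          = 2 * (Q t).re * ‖V t‖ ^ 2 + ((S t * U t) * (starRingEnd ℂ) (V t)).re := by
        rw [← Complex.normSq_eq_norm_sq, Complex.normSq_apply]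
        simp; ring
      have b1 := (abs_le.1 (abs_re_mul_conj_le (V t) (U t))).2
      have b2 := (abs_le.1 (abs_re_mul_conj_le (S t * U t) (V t))).2
      rw [norm_mul] at b2
      set a := ‖U t‖
      set b := ‖V t‖
      have ha : 0 ≤ a := norm_nonneg _
      have hb : 0 ≤ b := norm_nonneg _
      have hp : 0 < t ^ k := by positivity
      have b3 : ‖S t‖ * a * b ≤ C * t ^ k * a * b := by gcongr
      have b4 : (Q t).re * b ^ 2 ≤ -c * t ^ (k + 1) * b ^ 2 := by gcongr
      rw [e2]
      have key : 2 * (1 + C) * t * a * b ≤ 4 * c * t ^ 2 * b ^ 2 + (1 + C) ^ 2 / (4 * c) * a ^ 2 := by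
        have : 0 ≤ (4 * c * t * b - (1 + C) * a) ^ 2 / (4 * c) := by positivity
        have e : (4 * c * t * b - (1 + C) * a) ^ 2 / (4 * c)
          = 4 * c * t ^ 2 * b ^ 2 + (1 + C) ^ 2 / (4 * c) * a ^ 2 - 2 * (1 + C) * t * a * b := by
          field_simp; ring
        linarith
      have key2 : t ^ k * (2 * (1 + C) * t * a * b) ≤
        t ^ k * (4 * c * t ^ 2 * b ^ 2 + (1 + C) ^ 2 / (4 * c) * a ^ 2) := by gcongr
      have key3 : (k + (1 + C) ^ 2 / (4 * c)) * (t ^ k * a ^ 2) ≤ N * (t ^ k * a ^ 2) := by gcongr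
      have key4 : 0 ≤ N * b ^ 2 := by positivity
      calc _ = t * (k * t ^ (k - 1)) * a ^ 2 + 2 * t * t ^ k * (V t * (starRingEnd ℂ) (U t)).re
            + t * (4 * ((Q t).re * b ^ 2) + 2 * (S t * U t * (starRingEnd ℂ) (V t)).re) := by ring
        _ ≤ k * t ^ k * a ^ 2 + 2 * t * t ^ k * (b * a)
            + t * (4 * (-c * t ^ (k + 1) * b ^ 2) + 2 * (C * t ^ k * a * b)) := by
            rw [e1]; gcongr; exact b2.trans b3
        _ ≤ _ := by
            rw [pow_succ t k]
            linarith)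
  refine ⟨K, N, ?_⟩
  filter_upwards [hK, eventually_ge_atTop 1] with t h ht
  have := one_le_pow₀ ht (n := k)
  nlinarith [sq_nonneg ‖U t‖, sq_nonneg ‖V t‖]

theorem re_add_mul_conj (Q S Y W : ℂ) : ((Q * W + S * Y) * (starRingEnd ℂ) W).re
    = Q.re * ‖W‖ ^ 2 + ((S * Y) * (starRingEnd ℂ) W).re := by
  rw [← Complex.normSq_eq_norm_sq, Complex.normSq_apply]
  simp; ring

theorem re_sub_mul_conj (Q Y W : ℂ) : ((W - Q * Y) * (starRingEnd ℂ) Y).re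
    = (W * (starRingEnd ℂ) Y).re - Q.re * ‖Y‖ ^ 2 := by
  rw [← Complex.normSq_eq_norm_sq, Complex.normSq_apply]
  simp; ring

/-- Pointwise lower bound for the derivative of `t² ‖W‖² - M² ‖Y‖²` along the system
`Y' = W - Q Y`, `W' = Q W + S Y`. -/
theorem le_deriv_energy {Q S Y W : ℂ} {c C M t : ℝ} {k : ℕ} (hc : 0 < c)
    (hMp : 0 < M) (hM : C = c / 2 * M) (hQ : c * t ^ (k + 1) ≤ Q.re) (hS : ‖S‖ ≤ C * t ^ k)
    (ht : 1 ≤ t) (ht2 : 2 * M / c ≤ t) :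
    c * t ^ (k + 1) * ((t * ‖W‖) ^ 2 + (M * ‖Y‖) ^ 2) ≤ (2 * t) * ‖W‖ ^ 2
      + t ^ 2 * (2 * ((Q * W + S * Y) * (starRingEnd ℂ) W).re)
      - M ^ 2 * (2 * ((W - Q * Y) * (starRingEnd ℂ) Y).re) := by
  rw [re_add_mul_conj, re_sub_mul_conj]
  have b1 := (abs_le.1 (abs_re_mul_conj_le W Y)).2
  have b2 := (abs_le.1 (abs_re_mul_conj_le (S * Y) W)).1
  rw [norm_mul] at b2
  have b3 : ‖S‖ * ‖Y‖ * ‖W‖ ≤ C * t ^ k * ‖Y‖ * ‖W‖ := by gcongr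
  have b4 : c * t ^ (k + 1) * ‖W‖ ^ 2 ≤ Q.re * ‖W‖ ^ 2 := by gcongr
  have b5 : c * t ^ (k + 1) * ‖Y‖ ^ 2 ≤ Q.re * ‖Y‖ ^ 2 := by gcongr
  have hg1 : t ^ 2 * (c * t ^ (k + 1) * ‖W‖ ^ 2 - C * t ^ k * ‖Y‖ * ‖W‖)
    ≤ t ^ 2 * (Q.re * ‖W‖ ^ 2 + (S * Y * (starRingEnd ℂ) W).re) := by
    gcongr; linarith
  have hg2 : M ^ 2 * ((W * (starRingEnd ℂ) Y).re - Q.re * ‖Y‖ ^ 2) ≤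
    M ^ 2 * (‖W‖ * ‖Y‖ - c * t ^ (k + 1) * ‖Y‖ ^ 2) := by
    gcongr
  have hg3 : 0 ≤ t * ‖W‖ ^ 2 := by positivity
  have f3 : M / t ≤ c / 2 * t ^ (k + 1) := by
    have : M / t ≤ c / 2 := by
      rw [div_le_iff₀ (by positivity)]
      rw [div_le_iff₀ hc] at ht2; linarith
    have h2 : 1 ≤ t ^ (k + 1) := one_le_pow₀ ht
    nlinarith
  have f4 : M / t * ((t * ‖W‖) * (M * ‖Y‖)) ≤ c / 2 * t ^ (k + 1) * ((t * ‖W‖) * (M * ‖Y‖)) := by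
    gcongr
  have f1 : t ^ 2 * (C * t ^ k * ‖Y‖ * ‖W‖)
      = c / 2 * t ^ (k + 1) * ((t * ‖W‖) * (M * ‖Y‖)) := by
    rw [hM]; ring
  have f2 : M ^ 2 * (‖W‖ * ‖Y‖) = M / t * ((t * ‖W‖) * (M * ‖Y‖)) := by
    field_simp
  have h1 : t ^ 2 * (c * t ^ (k + 1) * ‖W‖ ^ 2) = c * t ^ (k + 1) * (t * ‖W‖) ^ 2 := by ring
  have h2 : M ^ 2 * (c * t ^ (k + 1) * ‖Y‖ ^ 2) = c * t ^ (k + 1) * (M * ‖Y‖) ^ 2 := by ring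
  have h3 : 0 ≤ c * t ^ (k + 1) * (t * ‖W‖ - M * ‖Y‖) ^ 2 := by positivity
  have h4 : 0 ≤ c * t ^ (k + 1) * ((t * ‖W‖) * (M * ‖Y‖)) := by positivity
  rw [mul_sub, h1, f1] at hg1
  rw [mul_sub (M ^ 2), mul_sub (M ^ 2), h2, f2] at hg2
  linarith

/-- For the system `Y' = W - Q Y`, `W' = Q W + S Y` it cannot happen that `Y → 0` while `W` grows
faster than `t ^ (k + 1)`. -/
theorem not_tendsto_zero_of_le_norm {Y W Q S : ℝ → ℂ} {C ε : ℝ} {k : ℕ} (hε : 0 < ε) (hC : 0 < C)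
    (hY : ∀ t, HasDerivAt Y (W t - Q t * Y t) t)
    (hW : ∀ t, HasDerivAt W (Q t * W t + S t * Y t) t)
    (hQ' : ∀ᶠ t in atTop, ‖Q t‖ ≤ C * t ^ (k + 1))
    (hS : ∀ᶠ t in atTop, ‖S t‖ ≤ C * t ^ k)
    (hWlow : ∀ᶠ t in atTop, ε * t ^ (k + 2) ≤ ‖W t‖) : ¬ Tendsto Y atTop (𝓝 0) := by
  intro h0
  have hYle : ∀ᶠ t in atTop, ‖Y t‖ ≤ 1 := by
    have := (tendsto_zero_iff_norm_tendsto_zero.1 h0).eventually_le_const one_pos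
    exact this
  obtain ⟨K, hK⟩ := exists_le_add_of_deriv_le (f := fun t => t ^ (k + 2))
    (f' := fun t => ((k + 2 : ℕ) : ℝ) * t ^ (k + 1))
    (g := fun t => (W t * (starRingEnd ℂ) (Y t)).re)
    (g' := fun t => ((Q t * W t + S t * Y t) * (starRingEnd ℂ) (Y t)
      + W t * (starRingEnd ℂ) (W t - Q t * Y t)).re)
    (.of_forall fun t => by simpa using hasDerivAt_pow (k + 2) t)
    (.of_forall fun t => by
      have h1 := (hW t).mul (hY t).star
      exact Complex.reCLM.hasFDerivAt.comp_hasDerivAt t h1)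
    (by
      filter_upwards [hWlow, hYle, hQ', hS, eventually_ge_atTop 1,
        eventually_ge_atTop ((4 * C + k + 2) / ε)] with t hw hy hq hs ht ht2
      have e : ((Q t * W t + S t * Y t) * (starRingEnd ℂ) (Y t)
          + W t * (starRingEnd ℂ) (W t - Q t * Y t)).re
        = ‖W t‖ ^ 2 + ((Q t * W t) * (starRingEnd ℂ) (Y t)).re
          + ((S t * Y t) * (starRingEnd ℂ) (Y t)).re
          - (W t * (starRingEnd ℂ) (Q t * Y t)).re := by
        rw [← Complex.normSq_eq_norm_sq, Complex.normSq_apply]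
        simp; ring
      have b1 := (abs_le.1 (abs_re_mul_conj_le (Q t * W t) (Y t))).1
      have b2 := (abs_le.1 (abs_re_mul_conj_le (S t * Y t) (Y t))).1
      have b3 := (abs_le.1 (abs_re_mul_conj_le (W t) (Q t * Y t))).2
      rw [norm_mul] at b1 b2 b3
      rw [div_le_iff₀ (by positivity)] at ht2
      have hT : 1 ≤ t ^ k := one_le_pow₀ ht
      have hT1 : 1 ≤ t ^ (k + 1) := one_le_pow₀ ht
      have hTT : t ^ k ≤ t ^ (k + 1) := pow_le_pow_right₀ ht (by omega)
      have hw' : (4 * C + k + 2) * t ^ (k + 1) ≤ ‖W t‖ := by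
        refine le_trans ?_ hw
        calc _ ≤ (t * ε) * t ^ (k + 1) := by gcongr
          _ = _ := by ring
      have c1 : ‖Q t‖ * ‖W t‖ * ‖Y t‖ ≤ C * t ^ (k + 1) * ‖W t‖ * 1 := by gcongr
      have c2 : ‖S t‖ * ‖Y t‖ * ‖Y t‖ ≤ C * t ^ k * 1 * 1 := by gcongr
      have c3 : ‖W t‖ * (‖Q t‖ * ‖Y t‖) ≤ ‖W t‖ * (C * t ^ (k + 1) * 1) := by gcongr
      have hk : (0 : ℝ) ≤ k := by positivity
      have w1 : 1 ≤ ‖W t‖ := by nlinarith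
      rw [e]
      push_cast
      have c4 : (4 * C + k + 2) * t ^ (k + 1) * ‖W t‖ ≤ ‖W t‖ * ‖W t‖ := by gcongr
      have c5 : C * t ^ k ≤ C * t ^ (k + 1) * ‖W t‖ := by
        calc C * t ^ k = C * t ^ k * 1 := by ring
          _ ≤ _ := by gcongr
      have c6 : (k + 2) * t ^ (k + 1) ≤ (k + 2) * t ^ (k + 1) * ‖W t‖ :=
        le_mul_of_one_le_right (by positivity) w1
      have c7 : 0 ≤ C * t ^ (k + 1) * ‖W t‖ := by positivity
      linarith)
  obtain ⟨K', hK'⟩ := exists_le_add_of_deriv_le (f := fun t => t) (f' := fun _ => 1)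
    (g := fun t => ‖Y t‖ ^ 2) (g' := fun t => 2 * ((W t - Q t * Y t) * (starRingEnd ℂ) (Y t)).re)
    (.of_forall fun t => hasDerivAt_id t) (.of_forall fun t => hasDerivAt_norm_sq (hY t))
    (by
      filter_upwards [hK, hYle, hQ', eventually_ge_atTop 1, eventually_ge_atTop (C + |K| + 1)]
        with t hk hy hq ht ht2
      have b1 := (abs_le.1 (abs_re_mul_conj_le (Q t * Y t) (Y t))).2
      rw [norm_mul] at b1
      have c1 : ‖Q t‖ * ‖Y t‖ * ‖Y t‖ ≤ C * t ^ (k + 1) * 1 * 1 := by gcongr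
      have hT1 : 1 ≤ t ^ (k + 1) := one_le_pow₀ ht
      have c2 : (C + |K| + 1) * t ^ (k + 1) ≤ t * t ^ (k + 1) := by gcongr
      have c3 : |K| ≤ |K| * t ^ (k + 1) := le_mul_of_one_le_right (abs_nonneg K) hT1
      have c4 := le_abs_self K
      rw [sub_mul, Complex.sub_re]
      have e : t ^ (k + 2) = t * t ^ (k + 1) := by ring
      rw [e] at hk
      linarith)
  obtain ⟨t, h1, h2, h3⟩ := (hK'.and (hYle.and (eventually_gt_atTop (1 + K')))).exists
  nlinarith [norm_nonneg (Y t)]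

/-- For the system `Y' = W - Q Y`, `W' = Q W + S Y` with `Re Q` large, a solution with `Y → 0`
is the recessive one. -/
theorem exists_mul_norm_le_of_tendsto_zero {Y W Q S : ℝ → ℂ} {c C : ℝ} {k : ℕ} (hc : 0 < c)
    (hC : 0 < C)
    (hY : ∀ t, HasDerivAt Y (W t - Q t * Y t) t)
    (hW : ∀ t, HasDerivAt W (Q t * W t + S t * Y t) t)
    (hQ : ∀ᶠ t in atTop, c * t ^ (k + 1) ≤ (Q t).re)
    (hQ' : ∀ᶠ t in atTop, ‖Q t‖ ≤ C * t ^ (k + 1))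
    (hS : ∀ᶠ t in atTop, ‖S t‖ ≤ C * t ^ k) (h0 : Tendsto Y atTop (𝓝 0)) :
    ∃ M : ℝ, ∀ᶠ t in atTop, t * ‖W t‖ ≤ M * ‖Y t‖ := by
  set M := 2 * C / c with hM
  have hMp : 0 < M := by positivity
  refine ⟨M, ?_⟩
  set G : ℝ → ℝ := fun t => t ^ 2 * ‖W t‖ ^ 2 - M ^ 2 * ‖Y t‖ ^ 2 with hG
  set G' : ℝ → ℝ := fun t => (2 * t) * ‖W t‖ ^ 2
      + t ^ 2 * (2 * ((Q t * W t + S t * Y t) * (starRingEnd ℂ) (W t)).re)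
      - M ^ 2 * (2 * ((W t - Q t * Y t) * (starRingEnd ℂ) (Y t)).re) with hG'
  have hGd : ∀ t, HasDerivAt G (G' t) t := fun t => by
    refine HasDerivAt.sub (HasDerivAt.mul ?_ (hasDerivAt_norm_sq (hW t)))
      ((hasDerivAt_norm_sq (hY t)).const_mul (M ^ 2))
    simpa using hasDerivAt_pow 2 t
  have hmono : ∀ᶠ t in atTop, 0 ≤ G' t ∧ ((2 * k + 6 : ℕ) : ℝ) * G t ≤ t * G' t := by
    filter_upwards [hQ, hS, eventually_ge_atTop 1, eventually_ge_atTop (2 * M / c),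
      eventually_ge_atTop (((2 * k + 6 : ℕ) : ℝ) / c)] with t hQ hS ht ht2 ht3
    have hlow : _ ≤ G' t := le_deriv_energy (W := W t) (Y := Y t) hc hMp
      (by rw [hM]; field_simp) hQ hS ht ht2
    have hpos : 0 ≤ c * t ^ (k + 1) * ((t * ‖W t‖) ^ 2 + (M * ‖Y t‖) ^ 2) := by positivity
    refine ⟨hpos.trans hlow, ?_⟩
    rw [div_le_iff₀ hc] at ht3
    have h2 : 1 ≤ t ^ (k + 1) := one_le_pow₀ ht
    calc ((2 * k + 6 : ℕ) : ℝ) * G t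
        ≤ ((2 * k + 6 : ℕ) : ℝ) * ((t * ‖W t‖) ^ 2 + (M * ‖Y t‖) ^ 2) := by
          gcongr; simp only [hG]; nlinarith [sq_nonneg (M * ‖Y t‖)]
      _ ≤ t * c * ((t * ‖W t‖) ^ 2 + (M * ‖Y t‖) ^ 2) := by gcongr
      _ ≤ t * c * ((t * ‖W t‖) ^ 2 + (M * ‖Y t‖) ^ 2) * t ^ (k + 1) :=
          le_mul_of_one_le_right (by positivity) h2
      _ = t * (c * t ^ (k + 1) * ((t * ‖W t‖) ^ 2 + (M * ‖Y t‖) ^ 2)) := by ring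
      _ ≤ t * G' t := by gcongr
  by_contra hcon
  obtain ⟨t₀, ht₀⟩ := eventually_atTop.1 (hmono.and (eventually_ge_atTop 1))
  obtain ⟨t₁, ht₁, hlt⟩ : ∃ t₁ ≥ t₀, 0 < G t₁ := by
    obtain ⟨t₁, h1, h2⟩ := (Filter.not_eventually.1 hcon).forall_exists_of_atTop t₀
    refine ⟨t₁, h1, ?_⟩
    have := (ht₀ t₁ h1).2
    have h3 : M * ‖Y t₁‖ < t₁ * ‖W t₁‖ := not_le.1 h2
    have h4 : (M * ‖Y t₁‖) ^ 2 < (t₁ * ‖W t₁‖) ^ 2 := by gcongr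
    simp only [hG]
    nlinarith
  have hGpos : ∀ t ≥ t₁, G t₁ ≤ G t := by
    have : MonotoneOn G (Set.Ici t₁) := by
      refine monotoneOn_of_deriv_nonneg (convex_Ici t₁)
        (fun s hs => (hGd s).continuousAt.continuousWithinAt)
        (fun s hs => (hGd s).differentiableAt.differentiableWithinAt) fun s hs => ?_
      rw [(hGd s).deriv]
      exact (ht₀ s (ht₁.trans (interior_subset hs))).1.1
    exact fun t ht => this Set.self_mem_Ici ht ht
  -- `G` grows at least like `t ^ (2 k + 6)`
  obtain ⟨δ, hδ, hGδ⟩ : ∃ δ > 0, ∀ᶠ t in atTop, δ * t ^ (2 * k + 6) ≤ G t := by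
    obtain ⟨K, hK⟩ := exists_le_add_of_deriv_le (f := fun t => ((2 * k + 6 : ℕ) : ℝ) * Real.log t)
      (f' := fun t => ((2 * k + 6 : ℕ) : ℝ) * t⁻¹) (g := fun t => Real.log (G t))
      (g' := fun t => G' t / G t)
      (by filter_upwards [eventually_gt_atTop 0] with t ht
          exact (Real.hasDerivAt_log ht.ne').const_mul _)
      (by filter_upwards [eventually_ge_atTop t₁] with t ht
          exact (hGd t).log (hlt.trans_le (hGpos t ht)).ne')
      (by filter_upwards [eventually_ge_atTop t₁, hmono, eventually_gt_atTop 0] with t ht h1 h2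
          rw [← div_eq_mul_inv, div_le_div_iff₀ h2 (hlt.trans_le (hGpos t ht))]
          linarith [h1.2])
    refine ⟨Real.exp (-K), Real.exp_pos _, ?_⟩
    filter_upwards [hK, eventually_ge_atTop t₁, eventually_gt_atTop 0] with t h1 h2 h3
    rw [← Real.exp_log (hlt.trans_le (hGpos t h2)), ← Real.exp_log (pow_pos h3 (2 * k + 6)),
      ← Real.exp_add, Real.exp_le_exp, Real.log_pow]
    linarith
  have hWlow : ∀ᶠ t in atTop, √δ * t ^ (k + 2) ≤ ‖W t‖ := by
    filter_upwards [hGδ, eventually_gt_atTop 0] with t h1 h2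
    refine abs_le_of_sq_le_sq' ?_ (norm_nonneg _) |>.2
    rw [mul_pow, Real.sq_sqrt hδ.le]
    have : t ^ 2 * (δ * (t ^ (k + 2)) ^ 2) ≤ t ^ 2 * ‖W t‖ ^ 2 := by
      simp only [hG] at h1
      have e : t ^ 2 * (δ * (t ^ (k + 2)) ^ 2) = δ * t ^ (2 * k + 6) := by ring
      nlinarith [mul_nonneg (sq_nonneg M) (sq_nonneg ‖Y t‖)]
    exact le_of_mul_le_mul_left this (by positivity)
  exact not_tendsto_zero_of_le_norm (Real.sqrt_pos.2 hδ) hC hY hW hQ' hS hWlow h0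

/-- An entire function of polynomial growth is a polynomial. -/
theorem exists_polynomial_of_norm_le {u : ℂ → ℂ} (hu : Differentiable ℂ u) {K : ℝ} {N : ℕ}
    (h : ∀ z, ‖u z‖ ≤ K * (1 + ‖z‖) ^ N) : ∃ p : Polynomial ℂ, ∀ z, u z = p.eval z := by
  have hvan : ∀ n, N < n → iteratedDeriv n u 0 = 0 := by
    intro n hn
    have hb : ∀ R : ℝ, 1 ≤ R → ‖iteratedDeriv n u 0‖ ≤ (n.factorial * (|K| * 2 ^ N)) * R⁻¹ := by
      intro R hR
      have hR0 : 0 < R := by linarith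
      refine (Complex.norm_iteratedDeriv_le_of_forall_mem_sphere_norm_le n hR0
        hu.diffContOnCl (C := |K| * (2 * R) ^ N) ?_).trans ?_
      · intro z hz
        have hz' : ‖z‖ = R := by simpa using hz
        refine (h z).trans ?_
        rw [hz']
        have : 1 + R ≤ 2 * R := by linarith
        gcongr
        exact le_abs_self K
      · rw [div_le_iff₀ (by positivity), mul_pow]
        have : R ^ N * R ≤ R ^ n := by
          rw [← pow_succ]; exact pow_le_pow_right₀ hR hn
        calc (n.factorial : ℝ) * (|K| * (2 ^ N * R ^ N))
            = n.factorial * (|K| * 2 ^ N) * R⁻¹ * (R ^ N * R) := by field_simp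
          _ ≤ _ := by gcongr
    have ht : Tendsto (fun R : ℝ => (n.factorial * (|K| * 2 ^ N)) * R⁻¹) atTop (𝓝 0) := by
      simpa using tendsto_inv_atTop_zero.const_mul ((n.factorial : ℝ) * (|K| * 2 ^ N))
    have := ge_of_tendsto ht ((eventually_ge_atTop 1).mono hb)
    simpa using this
  refine ⟨∑ n ∈ Finset.range (N + 1),
    Polynomial.C ((n.factorial : ℂ)⁻¹ * iteratedDeriv n u 0) * Polynomial.X ^ n, fun z => ?_⟩
  rw [← Complex.taylorSeries_eq_of_entire' 0 z hu, Polynomial.eval_finsetSum,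
    tsum_eq_sum (s := Finset.range (N + 1))]
  · simp
  · intro n hn
    rw [Finset.mem_range] at hn
    rw [hvan n (by omega)]
    simp

/-- Phragmén–Lindelöf in a sector for functions of finite order with polynomial bounds on the two
boundary rays. -/
theorem norm_le_of_sector {u : ℂ → ℂ} (hu : Differentiable ℂ u) {A B K a b : ℝ} {m N : ℕ}
    (hB : 0 ≤ B) (hm : 1 ≤ m)
    (hord : ∀ z, ‖u z‖ ≤ A * Real.exp (B * (1 + ‖z‖) ^ m)) (hab : a < b)
    (hgap : (m : ℝ) < Real.pi / (b - a)) (hK : 0 ≤ K)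
    (ha : ∀ t : ℝ, 0 ≤ t → ‖u (t * exp (a * I))‖ ≤ K * (1 + t) ^ N)
    (hb : ∀ t : ℝ, 0 ≤ t → ‖u (t * exp (b * I))‖ ≤ K * (1 + t) ^ N) {θ : ℝ}
    (hθ : θ ∈ Set.Icc a b) {t : ℝ} (ht : 0 < t) :
    ‖u (t * exp (θ * I))‖ ≤ K * 2 ^ N * (1 + t) ^ N := by
  have hba : 0 < b - a := by linarith
  have hgap2 : b - a < Real.pi := by
    have h1 : (1 : ℝ) ≤ m := by exact_mod_cast hm
    have := h1.trans_lt hgap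
    rwa [lt_div_iff₀ hba, one_mul] at this
  set den : ℂ → ℂ := fun ζ => 1 + exp (ζ - ((a + b) / 2 : ℝ) * I) with hden
  have hre : ∀ ζ : ℂ, ζ.im ∈ Set.Icc a b → 0 ≤ (exp (ζ - ((a + b) / 2 : ℝ) * I)).re := by
    intro ζ hζ
    rw [Complex.exp_re]
    refine mul_nonneg (Real.exp_nonneg _) (Real.cos_nonneg_of_mem_Icc ?_)
    have : (ζ - ((a + b) / 2 : ℝ) * I).im = ζ.im - (a + b) / 2 := by simp
    rw [this]
    constructor <;> linarith [hζ.1, hζ.2]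
  have hden1 : ∀ ζ : ℂ, ζ.im ∈ Set.Icc a b → 1 ≤ ‖den ζ‖ := by
    intro ζ hζ
    have h1 := Complex.re_le_norm (den ζ)
    have h2 := hre ζ hζ
    have : (den ζ).re = 1 + (exp (ζ - ((a + b) / 2 : ℝ) * I)).re := by simp [hden]
    linarith
  have hnexp : ∀ ζ : ℂ, ‖exp (ζ - ((a + b) / 2 : ℝ) * I)‖ = ‖exp ζ‖ := by
    intro ζ
    rw [Complex.norm_exp, Complex.norm_exp]; simp
  have hden2 : ∀ ζ : ℂ, ζ.im ∈ Set.Icc a b → 1 + ‖exp ζ‖ ≤ 2 * ‖den ζ‖ := by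
    intro ζ hζ
    have h1 := hden1 ζ hζ
    have h2 := hre ζ hζ
    have h3 : ‖exp ζ‖ ≤ ‖den ζ‖ := by
      rw [← hnexp ζ]
      refine abs_le_of_sq_le_sq' ?_ (norm_nonneg _) |>.2
      rw [← Complex.normSq_eq_norm_sq, ← Complex.normSq_eq_norm_sq, Complex.normSq_apply,
        Complex.normSq_apply]
      simp only [hden, Complex.add_re, Complex.add_im, Complex.one_re, Complex.one_im]
      nlinarith
    linarith
  have hdenU : ∀ ζ : ℂ, ‖den ζ‖ ≤ 1 + ‖exp ζ‖ := by
    intro ζ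
    rw [← hnexp ζ]
    exact (norm_add_le _ _).trans (by simp)
  set f : ℂ → ℂ := fun ζ => u (exp ζ) / den ζ ^ N with hf
  have hdne : ∀ ζ : ℂ, ζ.im ∈ Set.Icc a b → den ζ ^ N ≠ 0 := fun ζ hζ =>
    pow_ne_zero _ (norm_pos_iff.1 (one_pos.trans_le (hden1 ζ hζ)))
  have hdiff : ∀ ζ : ℂ, ζ.im ∈ Set.Icc a b → DifferentiableAt ℂ f ζ := fun ζ hζ => by
    refine DifferentiableAt.div ?_ ?_ (hdne ζ hζ)
    · exact (hu _).comp ζ Complex.differentiable_exp.differentiableAt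
    · simp only [hden]; fun_prop
  have hray : ∀ ζ : ℂ, exp ζ = (Real.exp ζ.re : ℝ) * exp (ζ.im * I) := by
    intro ζ
    rw [Complex.ofReal_exp, ← Complex.exp_add, Complex.re_add_im]
  have hbd : ∀ ζ : ℂ, ζ.im ∈ Set.Icc a b → ‖u (exp ζ)‖ ≤ K * (1 + Real.exp ζ.re) ^ N →
      ‖f ζ‖ ≤ K * 2 ^ N := by
    intro ζ hζ h
    simp only [hf, norm_div, norm_pow]
    rw [div_le_iff₀ (pow_pos (one_pos.trans_le (hden1 ζ hζ)) N)]
    refine h.trans ?_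
    rw [mul_assoc, ← mul_pow]
    have := hden2 ζ hζ
    rw [Complex.norm_exp] at this
    gcongr
  have hamem : a ∈ Set.Icc a b := ⟨le_rfl, hab.le⟩
  have hbmem : b ∈ Set.Icc a b := ⟨hab.le, le_rfl⟩
  have hcl : closure (Complex.im ⁻¹' Set.Ioo a b) ⊆ Complex.im ⁻¹' Set.Icc a b :=
    closure_minimal (Set.preimage_mono Set.Ioo_subset_Icc_self)
      (isClosed_Icc.preimage Complex.continuous_im)
  have key : ∀ ζ : ℂ, ζ.im ∈ Set.Icc a b → ‖f ζ‖ ≤ K * 2 ^ N := by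
    intro ζ hζ
    refine PhragmenLindelof.horizontal_strip (f := f) (a := a) (b := b) ?_ ?_ ?_ ?_ hζ.1 hζ.2
    · exact ⟨fun z hz => (hdiff z (Set.Ioo_subset_Icc_self hz)).differentiableWithinAt,
        fun z hz => (hdiff z (hcl hz)).continuousAt.continuousWithinAt⟩
    · refine ⟨m, hgap, B * 2 ^ m, Asymptotics.IsBigO.of_bound A ?_⟩
      refine Filter.mem_inf_of_right ?_
      intro z hz
      have hz' : z.im ∈ Set.Icc a b := Set.Ioo_subset_Icc_self hz
      have hA : 0 ≤ A := by
        have := (norm_nonneg _).trans (hord 0)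
        exact nonneg_of_mul_nonneg_left this (Real.exp_pos _)
      simp only [Set.mem_ofPred_eq, hf, norm_div, norm_pow, Real.norm_eq_abs, Real.abs_exp]
      refine (div_le_self (norm_nonneg _) (one_le_pow₀ (hden1 z hz'))).trans ?_
      refine (hord _).trans ?_
      have h1 : 1 ≤ Real.exp |z.re| := Real.one_le_exp (abs_nonneg _)
      have h2 : Real.exp z.re ≤ Real.exp |z.re| := Real.exp_le_exp.2 (le_abs_self _)
      have h3 : (1 + ‖exp z‖) ^ m ≤ 2 ^ m * Real.exp (m * |z.re|) := by
        rw [Complex.norm_exp, mul_comm (m : ℝ), Real.exp_mul, Real.rpow_natCast, ← mul_pow]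
        gcongr
        linarith
      rw [mul_assoc B]
      gcongr
    · intro z hz
      refine hbd z (hz ▸ hamem) ?_
      rw [hray, hz]
      exact ha _ (Real.exp_nonneg _)
    · intro z hz
      refine hbd z (hz ▸ hbmem) ?_
      rw [hray, hz]
      exact hb _ (Real.exp_nonneg _)
  set ζ : ℂ := ⟨Real.log t, θ⟩ with hζ
  have e : exp ζ = t * exp (θ * I) := by
    rw [hray, hζ]; simp only; rw [Real.exp_log ht]
  have hk := key ζ hθ
  simp only [hf, norm_div, norm_pow] at hk
  rw [div_le_iff₀ (pow_pos (one_pos.trans_le (hden1 ζ hθ)) N), e] at hk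
  refine hk.trans ?_
  have := hdenU ζ
  rw [Complex.norm_exp] at this
  simp only [hζ, Real.exp_log ht] at this
  gcongr

/-- An entire function of order at most `m` that has polynomial growth along every ray with
`cos (m θ) ≠ 0` is a polynomial. -/
theorem exists_polynomial_of_rays {u : ℂ → ℂ} (hu : Differentiable ℂ u) {A B : ℝ} {m : ℕ}
    (hB : 0 ≤ B) (hm : 1 ≤ m) (hord : ∀ z, ‖u z‖ ≤ A * Real.exp (B * (1 + ‖z‖) ^ m))
    (hray : ∀ θ : ℝ, Real.cos (m * θ) ≠ 0 → ∃ (K : ℝ) (N : ℕ), 0 ≤ K ∧ ∀ t : ℝ, 0 ≤ t →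
      ‖u (t * exp (θ * I))‖ ≤ K * (1 + t) ^ N) :
    ∃ p : Polynomial ℂ, ∀ z, u z = p.eval z := by
  have hm0 : (0 : ℝ) < m := by exact_mod_cast hm
  have mono : ∀ {K K' t : ℝ} {N N' : ℕ}, 0 ≤ K → K ≤ K' → N ≤ N' → 0 ≤ t →
      K * (1 + t) ^ N ≤ K' * (1 + t) ^ N' := by
    intro K K' t N N' hK hKK hNN ht
    have : (1 : ℝ) ≤ 1 + t := by linarith
    exact mul_le_mul hKK (pow_le_pow_right₀ this hNN) (by positivity) (hK.trans hKK)
  have hunif : ∃ (K : ℝ) (N : ℕ), 0 ≤ K ∧ ∀ θ ∈ Set.Icc (-Real.pi) Real.pi, ∀ t : ℝ, 0 < t →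
      ‖u (t * exp (θ * I))‖ ≤ K * (1 + t) ^ N := by
    refine (isCompact_Icc (a := -Real.pi) (b := Real.pi)).induction_on (p := fun s => ∃ (K : ℝ) (N : ℕ), 0 ≤ K ∧ ∀ θ ∈ s,
      ∀ t : ℝ, 0 < t → ‖u (t * exp (θ * I))‖ ≤ K * (1 + t) ^ N) ?_ ?_ ?_ ?_
    · exact ⟨0, 0, le_rfl, by simp⟩
    · rintro s s' hs ⟨K, N, hK, h⟩
      exact ⟨K, N, hK, fun θ hθ => h θ (hs hθ)⟩
    · rintro s s' ⟨K, N, hK, h⟩ ⟨K', N', hK', h'⟩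
      refine ⟨K + K', N + N', by positivity, ?_⟩
      rintro θ (hθ | hθ) t ht
      · exact (h θ hθ t ht).trans (mono hK (by linarith) (by omega) ht.le)
      · exact (h' θ hθ t ht).trans (mono hK' (by linarith) (by omega) ht.le)
    · intro θ₀ _
      obtain ⟨ε, hε, hε4, hc1, hc2⟩ : ∃ ε > 0, 4 * m * ε < Real.pi ∧
          Real.cos (m * (θ₀ - ε)) ≠ 0 ∧ Real.cos (m * (θ₀ + ε)) ≠ 0 := by
        by_cases h0 : Real.cos (m * θ₀) = 0
        · refine ⟨Real.pi / (8 * m), by positivity, ?_, ?_, ?_⟩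
          · field_simp; nlinarith [Real.pi_pos]
          all_goals
            have e : (m : ℝ) * (Real.pi / (8 * m)) = Real.pi / 8 := by field_simp
            have hs : Real.sin (m * θ₀) ≠ 0 := by
              intro hs
              have := Real.sin_sq_add_cos_sq (m * θ₀)
              rw [hs, h0] at this
              norm_num at this
            have hs' : 0 < Real.sin (Real.pi / 8) :=
              Real.sin_pos_of_pos_of_lt_pi (by positivity) (by linarith [Real.pi_pos])
          · rw [mul_sub, e, Real.cos_sub, h0]
            rw [zero_mul, zero_add]
            exact mul_ne_zero hs hs'.ne'
          · rw [mul_add, e, Real.cos_add, h0]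
            rw [zero_mul, zero_sub]
            exact neg_ne_zero.2 (mul_ne_zero hs hs'.ne')
        · have hc : ∀ᶠ ε in 𝓝[>] (0 : ℝ), 4 * m * ε < Real.pi ∧
              Real.cos (m * (θ₀ - ε)) ≠ 0 ∧ Real.cos (m * (θ₀ + ε)) ≠ 0 := by
            refine nhdsWithin_le_nhds ?_
            have t1 : Tendsto (fun ε : ℝ => 4 * m * ε) (𝓝 0) (𝓝 (4 * m * 0)) :=
              Continuous.tendsto (by fun_prop) 0
            have t2 : Tendsto (fun ε : ℝ => Real.cos (m * (θ₀ - ε))) (𝓝 0)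
                (𝓝 (Real.cos (m * (θ₀ - 0)))) := Continuous.tendsto (by fun_prop) 0
            have t3 : Tendsto (fun ε : ℝ => Real.cos (m * (θ₀ + ε))) (𝓝 0)
                (𝓝 (Real.cos (m * (θ₀ + 0)))) := Continuous.tendsto (by fun_prop) 0
            exact (t1.eventually_lt_const (by simpa using Real.pi_pos)).and
              ((t2.eventually_ne (by simpa using h0)).and (t3.eventually_ne (by simpa using h0)))
          obtain ⟨ε, h, hε⟩ := (hc.and self_mem_nhdsWithin).exists
          exact ⟨ε, hε, h⟩
      obtain ⟨K, N, hK, h⟩ := hray _ hc1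
      obtain ⟨K', N', hK', h'⟩ := hray _ hc2
      refine ⟨Set.Icc (θ₀ - ε) (θ₀ + ε), mem_nhdsWithin_of_mem_nhds
        (Icc_mem_nhds (by linarith) (by linarith)), (K + K') * 2 ^ (N + N'), N + N',
        by positivity, fun θ hθ t ht => ?_⟩
      refine norm_le_of_sector hu hB hm hord (by linarith) ?_ (by positivity)
        (fun t ht => (h t ht).trans (mono hK (by linarith) (by omega) ht))
        (fun t ht => (h' t ht).trans (mono hK' (by linarith) (by omega) ht)) hθ ht
      rw [lt_div_iff₀ (by linarith)]
      nlinarith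
  obtain ⟨K, N, hK, h⟩ := hunif
  refine exists_polynomial_of_norm_le hu (K := K + ‖u 0‖) (N := N) fun z => ?_
  rcases eq_or_ne z 0 with rfl | hz
  · simp [hK]
  · have := h z.arg ⟨(Complex.neg_pi_lt_arg z).le, Complex.arg_le_pi z⟩ ‖z‖ (norm_pos_iff.2 hz)
    rw [Complex.norm_mul_exp_arg_mul_I] at this
    exact this.trans (mono hK (by linarith [norm_nonneg (u 0)]) le_rfl (norm_nonneg z))

/-- A polynomial of degree at most `k` is bounded by a multiple of `(1 + ‖z‖) ^ k`. -/
theorem Polynomial.exists_norm_eval_le {p : Polynomial ℂ} {k : ℕ} (hp : p.natDegree ≤ k) :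
    ∃ C : ℝ, 0 < C ∧ ∀ z, ‖p.eval z‖ ≤ C * (1 + ‖z‖) ^ k := by
  refine ⟨1 + ∑ i ∈ Finset.range (k + 1), ‖p.coeff i‖, by positivity, fun z => ?_⟩
  rw [Polynomial.eval_eq_sum_range' (Nat.lt_succ_of_le hp)]
  have h1 : (1 : ℝ) ≤ 1 + ‖z‖ := by linarith [norm_nonneg z]
  calc _ ≤ ∑ i ∈ Finset.range (k + 1), ‖p.coeff i * z ^ i‖ := norm_sum_le _ _
    _ ≤ ∑ i ∈ Finset.range (k + 1), ‖p.coeff i‖ * (1 + ‖z‖) ^ k := by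
        refine Finset.sum_le_sum fun i hi => ?_
        rw [norm_mul, norm_pow]
        gcongr
        calc ‖z‖ ^ i ≤ (1 + ‖z‖) ^ i := by gcongr; linarith
          _ ≤ _ := pow_le_pow_right₀ h1 (by simpa [Nat.lt_succ_iff] using hi)
    _ ≤ _ := by
        rw [← Finset.sum_mul]; gcongr; linarith

theorem Polynomial.exists_derivative_eq (q : Polynomial ℂ) : ∃ R, Polynomial.derivative R = q := by
  induction q using Polynomial.induction_on' with
  | add p q hp hq =>
    obtain ⟨R, rfl⟩ := hp
    obtain ⟨R', rfl⟩ := hq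
    exact ⟨R + R', by simp⟩
  | monomial n a =>
    refine ⟨Polynomial.monomial (n + 1) (a / (n + 1)), ?_⟩
    rw [Polynomial.derivative_monomial]
    have : (n : ℂ) + 1 ≠ 0 := by exact_mod_cast Nat.succ_ne_zero n
    simp [div_mul_cancel₀ _ this]

/-- If a nonzero polynomial solves `p'' = 2 q p' + S p` with `q` monic of degree `k + 1` and
`deg S ≤ k`, then the coefficient of `X ^ k` in `S` is `-2 deg p`. -/
theorem Polynomial.coeff_eq_of_ode {p q S : Polynomial ℂ} {k : ℕ} (hp : p ≠ 0) (hq : q.Monic)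
    (hqd : q.natDegree = k + 1) (hS : S.natDegree ≤ k)
    (h : derivative (derivative p) = 2 * q * derivative p + S * p) :
    S.coeff k = -2 * p.natDegree := by
  have hl : p.leadingCoeff ≠ 0 := leadingCoeff_ne_zero.2 hp
  have h1 := congrArg (fun r => r.coeff (k + p.natDegree)) h
  simp only [coeff_add] at h1
  have h0 : (derivative (derivative p)).coeff (k + p.natDegree) = 0 := by
    rcases Nat.eq_zero_or_pos p.natDegree with h0 | h0
    · rw [eq_C_of_natDegree_eq_zero h0]; simp
    · refine coeff_eq_zero_of_natDegree_lt ?_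
      have a1 := natDegree_derivative_le p
      have a2 := natDegree_derivative_le (derivative p)
      omega
  rw [coeff_mul_add_eq_of_natDegree_le hS le_rfl, coeff_natDegree, h0] at h1
  have h2 : (2 * q * derivative p).coeff (k + p.natDegree)
      = 2 * p.natDegree * p.leadingCoeff := by
    rcases hm : p.natDegree with _ | m
    · rw [eq_C_of_natDegree_eq_zero hm]; simp
    · rw [show k + (m + 1) = (k + 1) + m by ring, mul_assoc, mul_comm (2 : Polynomial ℂ),
        show (2 : Polynomial ℂ) = C 2 from (map_ofNat C 2).symm, coeff_mul_C,
        coeff_mul_add_eq_of_natDegree_le hqd.le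
          ((natDegree_derivative_le p).trans (by omega)), ← hqd, coeff_natDegree, hq,
        coeff_derivative, leadingCoeff, hm]
      push_cast; ring
  rw [h2] at h1
  have h3 : (S.coeff k + 2 * p.natDegree) * p.leadingCoeff = 0 := by linear_combination -h1
  linear_combination (mul_eq_zero.1 h3).resolve_right hl

theorem exists_bound_of_eventually {U : ℝ → ℂ} (hU : Continuous U) {K : ℝ} {N : ℕ}
    (h : ∀ᶠ t in atTop, ‖U t‖ ^ 2 ≤ K * t ^ N) :
    ∃ (K : ℝ) (N : ℕ), 0 ≤ K ∧ ∀ t : ℝ, 0 ≤ t → ‖U t‖ ≤ K * (1 + t) ^ N := by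
  obtain ⟨T, hT⟩ := eventually_atTop.1 h
  obtain ⟨D, hD⟩ := (isCompact_Icc (a := 0) (b := T)).exists_bound_of_continuousOn hU.continuousOn
  refine ⟨1 + |K| + |D|, N, by positivity, fun t ht => ?_⟩
  have h1 : (1 : ℝ) ≤ (1 + t) ^ N := one_le_pow₀ (by linarith)
  rcases le_total t T with h2 | h2
  · have := hD t ⟨ht, h2⟩
    have h3 := le_abs_self D
    calc ‖U t‖ ≤ (1 + |K| + |D|) * 1 := by linarith [abs_nonneg K]
      _ ≤ _ := by gcongr
  · have h3 : K * t ^ N ≤ |K| * (1 + t) ^ N := by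
      gcongr
      · exact le_abs_self K
      · linarith
    have h4 := hT t h2
    nlinarith [sq_nonneg (‖U t‖ - 1), mul_nonneg (abs_nonneg D) (zero_le_one.trans h1)]

theorem HasDerivAt.comp_ray {g : ℂ → ℂ} {g' w : ℂ} {t : ℝ} (hg : HasDerivAt g g' (t * w)) :
    HasDerivAt (fun s : ℝ => g (s * w)) (w * g') t := by
  have h1 : HasDerivAt (fun s : ℂ => s * w) w (t : ℂ) := by
    simpa using (hasDerivAt_id (t : ℂ)).mul_const w
  have := (HasDerivAt.comp (t : ℂ) hg h1).comp_ofReal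
  rwa [mul_comm] at this

/-- Solutions of `u'' = 2 q u' + S u` with polynomial coefficients have finite order. -/
theorem exists_norm_le_exp {u v : ℂ → ℂ} {q S : Polynomial ℂ} {k : ℕ}
    (hq : q.natDegree ≤ k + 1) (hS : S.natDegree ≤ k + 1)
    (hu : ∀ z, HasDerivAt u (v z) z)
    (hv : ∀ z, HasDerivAt v (2 * q.eval z * v z + S.eval z * u z) z) :
    ∃ A B : ℝ, 0 ≤ B ∧ ∀ z, ‖u z‖ ≤ A * Real.exp (B * (1 + ‖z‖) ^ (k + 2)) := by
  obtain ⟨C₁, hC₁, h₁⟩ := Polynomial.exists_norm_eval_le hq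
  obtain ⟨C₂, hC₂, h₂⟩ := Polynomial.exists_norm_eval_le hS
  set B := 1 + 4 * C₁ + C₂ with hB
  set E₀ := ‖u 0‖ ^ 2 + ‖v 0‖ ^ 2 with hE₀
  refine ⟨1 + E₀, B, by positivity, fun z => ?_⟩
  set w : ℂ := exp (z.arg * I)
  have hw : ‖w‖ = 1 := Complex.norm_exp_ofReal_mul_I _
  have hz : (‖z‖ : ℂ) * w = z := Complex.norm_mul_exp_arg_mul_I z
  set U : ℝ → ℂ := fun t => u (t * w)
  set V : ℝ → ℂ := fun t => v (t * w)
  set E : ℝ → ℝ := fun t => ‖U t‖ ^ 2 + ‖V t‖ ^ 2 with hE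
  set E' : ℝ → ℝ := fun t => 2 * ((w * V t) * (starRingEnd ℂ) (U t)).re
    + 2 * ((w * (2 * q.eval (t * w) * V t + S.eval (t * w) * U t)) * (starRingEnd ℂ) (V t)).re
    with hE'
  have hEd : ∀ t, HasDerivAt E (E' t) t := fun t =>
    (hasDerivAt_norm_sq (hu _).comp_ray).add (hasDerivAt_norm_sq (hv _).comp_ray)
  have hle : ∀ t, 0 ≤ t → E' t ≤ B * (1 + t) ^ (k + 1) * E t := by
    intro t ht
    have b1 := (abs_le.1 (abs_re_mul_conj_le (w * V t) (U t))).2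
    have b2 := (abs_le.1 (abs_re_mul_conj_le
      (w * (2 * q.eval (t * w) * V t + S.eval (t * w) * U t)) (V t))).2
    rw [norm_mul, hw, one_mul] at b1 b2
    have hn : ‖(t : ℂ) * w‖ = t := by simp [hw, abs_of_nonneg ht]
    have c1 := h₁ (t * w)
    have c2 := h₂ (t * w)
    rw [hn] at c1 c2
    have b3 : ‖2 * q.eval (t * w) * V t + S.eval (t * w) * U t‖
        ≤ 2 * (C₁ * (1 + t) ^ (k + 1)) * ‖V t‖ + C₂ * (1 + t) ^ (k + 1) * ‖U t‖ := by
      refine (norm_add_le _ _).trans ?_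
      rw [norm_mul, norm_mul, norm_mul, Complex.norm_two]
      gcongr
    have b4 := mul_le_mul_of_nonneg_right b3 (norm_nonneg (V t))
    have hT : 1 ≤ (1 + t) ^ (k + 1) := one_le_pow₀ (by linarith)
    set a := ‖U t‖
    set b := ‖V t‖
    have ab : 2 * (a * b) ≤ a ^ 2 + b ^ 2 := by nlinarith [sq_nonneg (a - b)]
    have ab2 : 2 * (b * b) ≤ 2 * (a ^ 2 + b ^ 2) := by nlinarith [sq_nonneg a]
    set T := (1 + t) ^ (k + 1)
    have d1 : 2 * (a * b) * 1 ≤ (a ^ 2 + b ^ 2) * T := by gcongr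
    have d2 : C₂ * T * (2 * (a * b)) ≤ C₂ * T * (a ^ 2 + b ^ 2) := by gcongr
    have d3 : 2 * (C₁ * T) * (2 * (b * b)) ≤ 2 * (C₁ * T) * (2 * (a ^ 2 + b ^ 2)) := by gcongr
    simp only [hE', hE, hB]
    change _ ≤ (1 + 4 * C₁ + C₂) * T * (a ^ 2 + b ^ 2)
    linarith
  set F : ℝ → ℝ := fun t => E t * Real.exp (-(B * (1 + t) ^ (k + 2))) with hF
  have hFd : ∀ t, HasDerivAt F (E' t * Real.exp (-(B * (1 + t) ^ (k + 2)))
      + E t * (Real.exp (-(B * (1 + t) ^ (k + 2))) *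
        (-(B * ((k + 2 : ℕ) * (1 + t) ^ (k + 1)))))) t := fun t => by
    have h1 : HasDerivAt (fun t : ℝ => (1 + t) ^ (k + 2)) ((k + 2 : ℕ) * (1 + t) ^ (k + 1)) t := by
      simpa using ((hasDerivAt_id' t).const_add 1).fun_pow (k + 2)
    exact (hEd t).mul ((h1.const_mul B).neg).exp
  have hanti : AntitoneOn F (Set.Ici 0) := by
    refine antitoneOn_of_deriv_nonpos (convex_Ici 0)
      (fun s hs => (hFd s).continuousAt.continuousWithinAt)
      (fun s hs => (hFd s).differentiableAt.differentiableWithinAt) fun s hs => ?_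
    rw [(hFd s).deriv]
    have hs0 : (0 : ℝ) ≤ s := interior_subset hs
    have h1 := hle s hs0
    have hE0 : 0 ≤ E s := by positivity
    have h2 : B * (1 + s) ^ (k + 1) * E s * 1 ≤ B * (1 + s) ^ (k + 1) * E s * (k + 2 : ℕ) := by
      gcongr; push_cast; linarith [(k.cast_nonneg : (0 : ℝ) ≤ k)]
    have e : E' s * Real.exp (-(B * (1 + s) ^ (k + 2)))
      + E s * (Real.exp (-(B * (1 + s) ^ (k + 2))) *
        (-(B * ((k + 2 : ℕ) * (1 + s) ^ (k + 1)))))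
      = (E' s - B * (1 + s) ^ (k + 1) * E s * (k + 2 : ℕ))
        * Real.exp (-(B * (1 + s) ^ (k + 2))) := by ring
    rw [e]
    exact mul_nonpos_of_nonpos_of_nonneg (by linarith) (Real.exp_nonneg _)
  have h3 := hanti (Set.self_mem_Ici) (norm_nonneg z : ‖z‖ ∈ Set.Ici 0) (norm_nonneg z)
  have hF0 : F 0 ≤ E₀ := by
    have : E 0 = E₀ := by simp [hE, hE₀, U, V]
    simp only [hF, this]
    refine mul_le_of_le_one_right (by positivity) (Real.exp_le_one_iff.2 ?_)
    have : 0 ≤ B * (1 + (0 : ℝ)) ^ (k + 2) := by positivity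
    linarith
  have h4 : E ‖z‖ ≤ E₀ * Real.exp (B * (1 + ‖z‖) ^ (k + 2)) := by
    have := h3.trans hF0
    simp only [hF, Real.exp_neg] at this
    rwa [← div_eq_mul_inv, div_le_iff₀ (Real.exp_pos _)] at this
  have h5 : ‖u z‖ ^ 2 ≤ E ‖z‖ := by
    simp only [hE, U, hz]
    nlinarith [sq_nonneg ‖V ‖z‖‖]
  have h6 : 1 ≤ Real.exp (B * (1 + ‖z‖) ^ (k + 2)) := Real.one_le_exp (by positivity)
  nlinarith [sq_nonneg (‖u z‖ - 1)]

theorem eventually_norm_eval_ray_le {p : Polynomial ℂ} {k : ℕ} (hp : p.natDegree ≤ k) {w : ℂ}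
    (hw : ‖w‖ = 1) : ∃ C : ℝ, 0 < C ∧ ∀ᶠ t : ℝ in atTop, ‖p.eval (t * w)‖ ≤ C * t ^ k := by
  obtain ⟨C, hC, h⟩ := Polynomial.exists_norm_eval_le hp
  refine ⟨C * 2 ^ k, by positivity, ?_⟩
  filter_upwards [eventually_ge_atTop 1] with t ht
  refine (h _).trans ?_
  have : ‖(t : ℂ) * w‖ = t := by simp [hw, abs_of_nonneg (zero_le_one.trans ht)]
  rw [this, mul_assoc, ← mul_pow]
  gcongr
  linarith

/-- The real part of `w q(t w)`, with `w = exp (i θ)` and `q` monic of degree `k + 1`, is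
`cos ((k + 2) θ) t ^ (k + 1)` up to lower order terms. -/
theorem eventually_abs_re_ray_sub_le {q : Polynomial ℂ} {k : ℕ} (hq : q.Monic)
    (hqd : q.natDegree = k + 1) (θ : ℝ) {c : ℝ} (hc : 0 < c) :
    ∀ᶠ t : ℝ in atTop, |(exp (θ * I) * q.eval (t * exp (θ * I))).re
      - Real.cos ((k + 2 : ℕ) * θ) * t ^ (k + 1)| ≤ c * t ^ (k + 1) := by
  have hwn : ‖exp (θ * I)‖ = 1 := Complex.norm_exp_ofReal_mul_I _
  have hd : (q - Polynomial.X ^ (k + 1)).natDegree ≤ k := by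
    refine Polynomial.natDegree_le_iff_coeff_eq_zero.2 fun n hn => ?_
    rcases (Nat.succ_le_of_lt hn).eq_or_lt with h | h
    · have : q.coeff (k + 1) = 1 := by rw [← hqd]; exact hq
      rw [← h]; simp [this]
    · rw [Polynomial.coeff_sub, Polynomial.coeff_eq_zero_of_natDegree_lt (by omega),
        Polynomial.coeff_X_pow, if_neg (by omega), sub_zero]
  obtain ⟨C, hC, h⟩ := eventually_norm_eval_ray_le hd hwn
  filter_upwards [h, eventually_ge_atTop (C / c), eventually_ge_atTop 0] with t ht h1 h0
  set w := exp (θ * I) with hw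
  have e1 : (w * ((t : ℂ) * w) ^ (k + 1)).re = Real.cos ((k + 2 : ℕ) * θ) * t ^ (k + 1) := by
    have : w * ((t : ℂ) * w) ^ (k + 1) = ((t ^ (k + 1) : ℝ) : ℂ)
        * exp (((k + 2 : ℕ) * θ : ℝ) * I) := by
      have : exp (((k + 2 : ℕ) * θ : ℝ) * I) = w ^ (k + 2) := by
        rw [hw, ← Complex.exp_nat_mul]; congr 1; push_cast; ring
      rw [this]; push_cast; ring
    rw [this, Complex.re_ofReal_mul, Complex.exp_ofReal_mul_I_re, mul_comm]
  have e2 : (w * q.eval (t * w)).re - Real.cos ((k + 2 : ℕ) * θ) * t ^ (k + 1)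
      = (w * (q - Polynomial.X ^ (k + 1)).eval (t * w)).re := by
    rw [← e1, ← Complex.sub_re]; simp [mul_sub]
  rw [e2]
  refine (Complex.abs_re_le_norm _).trans ?_
  rw [norm_mul, hwn, one_mul]
  refine ht.trans ?_
  rw [div_le_iff₀ hc] at h1
  calc C * t ^ k ≤ t * c * t ^ k := by gcongr
    _ = _ := by ring

/-- If `y'' = (q² - q' + S) y` with `q` monic of degree `k + 1`, `deg S ≤ k`, and `y` tends to zero
along every ray with `cos ((k + 2) θ) > 0`, then the coefficient of `X ^ k` in `S` is a nonpositive
even integer. -/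
theorem exists_coeff_eq_of_subdominant {y : ℂ → ℂ} {q S : Polynomial ℂ} {k : ℕ}
    (hq : q.Monic) (hqd : q.natDegree = k + 1) (hS : S.natDegree ≤ k)
    (hy : Differentiable ℂ y) (hy0 : y ≠ 0)
    (hode : ∀ z, deriv (deriv y) z =
      (q.eval z ^ 2 - (Polynomial.derivative q).eval z + S.eval z) * y z)
    (hsub : ∀ θ : ℝ, 0 < Real.cos ((k + 2 : ℕ) * θ) →
      Tendsto (fun r : ℝ => y (r * exp (θ * I))) atTop (𝓝 0)) :
    ∃ m : ℕ, S.coeff k = -2 * m := by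
  obtain ⟨R, hR⟩ := q.exists_derivative_eq
  set W : ℂ → ℂ := fun z => deriv y z + q.eval z * y z with hWdef
  set e : ℂ → ℂ := fun z => exp (R.eval z) with hedef
  have hy1 : ∀ z, HasDerivAt y (W z - q.eval z * y z) z := fun z => by
    simpa [hWdef] using (hy z).hasDerivAt
  have hy2 : Differentiable ℂ (deriv y) := hy.deriv
  have hW1 : ∀ z, HasDerivAt W (q.eval z * W z + S.eval z * y z) z := fun z => by
    have := (hy2 z).hasDerivAt.add ((q.hasDerivAt z).mul (hy z).hasDerivAt)
    refine this.congr_deriv ?_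
    rw [hode]; simp only [hWdef]; ring
  have he : ∀ z, HasDerivAt e (q.eval z * e z) z := fun z => by
    have := (R.hasDerivAt z).cexp
    rw [hR] at this
    exact this.congr_deriv (mul_comm _ _)
  set u : ℂ → ℂ := fun z => y z * e z with hudef
  set v : ℂ → ℂ := fun z => W z * e z with hvdef
  have hu : ∀ z, HasDerivAt u (v z) z := fun z =>
    ((hy1 z).mul (he z)).congr_deriv (by simp only [hvdef]; ring)
  have hv : ∀ z, HasDerivAt v (2 * q.eval z * v z + S.eval z * u z) z := fun z =>
    ((hW1 z).mul (he z)).congr_deriv (by simp only [hvdef, hudef]; ring)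
  have hudiff : Differentiable ℂ u := fun z => (hu z).differentiableAt
  obtain ⟨A, B, hB, hord⟩ := exists_norm_le_exp hqd.le (hS.trans (Nat.le_succ k)) hu hv
  obtain ⟨p, hp⟩ := exists_polynomial_of_rays hudiff hB (by omega) hord (fun θ hθ => by
    set w : ℂ := exp (θ * I) with hw
    have hwn : ‖w‖ = 1 := Complex.norm_exp_ofReal_mul_I _
    suffices h : ∃ (K : ℝ) (N : ℕ), ∀ᶠ t : ℝ in atTop, ‖u (t * w)‖ ^ 2 ≤ K * t ^ N by
      obtain ⟨K, N, h⟩ := h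
      exact exists_bound_of_eventually (U := fun t : ℝ => u (t * w))
        (hudiff.continuous.comp (by fun_prop)) h
    obtain ⟨C₁, hC₁, hq1⟩ := eventually_norm_eval_ray_le hqd.le hwn
    obtain ⟨C₂, hC₂, hS1⟩ := eventually_norm_eval_ray_le hS hwn
    have hSb : ∀ᶠ t : ℝ in atTop, ‖w ^ 2 * S.eval (t * w)‖ ≤ (C₁ + C₂) * t ^ k := by
      filter_upwards [hS1, eventually_ge_atTop 0] with t ht h0
      rw [norm_mul, norm_pow, hwn, one_pow, one_mul]
      refine ht.trans ?_
      gcongr; linarith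
    rcases lt_or_gt_of_ne hθ with hneg | hpos
    · refine exists_norm_le_pow_of_damped (U := fun t => u (t * w)) (V := fun t => w * v (t * w))
        (Q := fun t => w * q.eval (t * w)) (S := fun t => w ^ 2 * S.eval (t * w))
        (half_pos (neg_pos.2 hneg)) (fun t => (hu _).comp_ray)
        (fun t => (((hv _).comp_ray).const_mul w).congr_deriv (by ring)) ?_ hSb
      filter_upwards [eventually_abs_re_ray_sub_le hq hqd θ (half_pos (neg_pos.2 hneg))] with t ht
      have := (abs_le.1 ht).2
      linarith
    · obtain ⟨M, hM⟩ := exists_mul_norm_le_of_tendsto_zero (Y := fun t => y (t * w))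
        (W := fun t => w * W (t * w))
        (Q := fun t => w * q.eval (t * w)) (S := fun t => w ^ 2 * S.eval (t * w))
        (C := C₁ + C₂) (half_pos hpos) (by positivity)
        (fun t => ((hy1 _).comp_ray).congr_deriv (by ring))
        (fun t => (((hW1 _).comp_ray).const_mul w).congr_deriv (by ring))
        (by
          filter_upwards [eventually_abs_re_ray_sub_le hq hqd θ (half_pos hpos)] with t ht
          have := (abs_le.1 ht).1
          linarith)
        (by
          filter_upwards [hq1, eventually_ge_atTop 0] with t ht h0
          rw [norm_mul, hwn, one_mul]
          refine ht.trans ?_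
          gcongr; linarith) hSb (hsub θ hpos)
      obtain ⟨N, hN⟩ := exists_nat_ge (2 * M)
      obtain ⟨K, hK⟩ := exists_le_mul_pow_of_deriv_le (N := N)
        (.of_forall fun t : ℝ => hasDerivAt_norm_sq (hu (t * w)).comp_ray) (by
          filter_upwards [hM, eventually_ge_atTop 0] with t ht h0
          have b1 := (abs_le.1 (abs_re_mul_conj_le (w * v (t * w)) (u (t * w)))).2
          have b2 : t * ‖w * v (t * w)‖ ≤ M * ‖u (t * w)‖ := by
            have := mul_le_mul_of_nonneg_right ht (norm_nonneg (e (t * w)))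
            simp only [hvdef, hudef, norm_mul] at this ⊢
            linarith
          calc t * (2 * (w * v (t * w) * (starRingEnd ℂ) (u (t * w))).re)
              ≤ t * (2 * (‖w * v (t * w)‖ * ‖u (t * w)‖)) := by gcongr
            _ = 2 * (t * ‖w * v (t * w)‖) * ‖u (t * w)‖ := by ring
            _ ≤ 2 * (M * ‖u (t * w)‖) * ‖u (t * w)‖ := by gcongr
            _ = 2 * M * ‖u (t * w)‖ ^ 2 := by ring
            _ ≤ N * ‖u (t * w)‖ ^ 2 := by gcongr)
      exact ⟨K, N, hK⟩)
  have hp0 : p ≠ 0 := by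
    rintro rfl
    refine hy0 (funext fun z => ?_)
    have := hp z
    simpa [hudef, hedef] using this
  refine ⟨p.natDegree, Polynomial.coeff_eq_of_ode hp0 hq hqd hS (Polynomial.funext fun z => ?_)⟩
  have hup : u = fun z => p.eval z := funext hp
  have hvp : v = fun z => (Polynomial.derivative p).eval z := funext fun z => by
    rw [← (hu z).deriv, hup, p.deriv]
  have h1 := (hv z).deriv
  rw [hvp, hup, Polynomial.deriv] at h1
  simpa using h1

/-- The coefficients of the formal square root with constant term `1` of the power series with
coefficients `1, p 1, p 2, …`. -/
noncomputable def sqrtCoeff (p : ℕ → ℂ) : ℕ → ℂ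
  | 0 => 1
  | n + 1 => (p (n + 1) - ∑ i : Fin n, sqrtCoeff p (i + 1) * sqrtCoeff p (n - i)) / 2

theorem continuous_sqrtCoeff (n : ℕ) : Continuous fun p => sqrtCoeff p n := by
  induction n using Nat.strong_induction_on with
  | _ n ih =>
    rcases n with _ | n
    · simpa [sqrtCoeff] using continuous_const
    · have : (fun p => sqrtCoeff p (n + 1)) = fun p : ℕ → ℂ =>
          (p (n + 1) - ∑ i : Fin n, sqrtCoeff p (i + 1) * sqrtCoeff p (n - i)) / 2 :=
        funext fun p => by rw [sqrtCoeff]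
      rw [this]
      refine ((continuous_apply _).sub (continuous_finsetSum _ fun i _ => ?_)).div_const _
      exact (ih _ (by omega)).mul (ih _ (by omega))

theorem sqrtCoeff_succ (p : ℕ → ℂ) (n : ℕ) :
    2 * sqrtCoeff p (n + 1) + ∑ i ∈ Finset.range n, sqrtCoeff p (i + 1) * sqrtCoeff p (n - i)
      = p (n + 1) := by
  rw [sqrtCoeff, Finset.sum_range]; ring

theorem sum_antidiagonal_sqrtCoeff (p : ℕ → ℂ) (n : ℕ) :
    ∑ x ∈ Finset.HasAntidiagonal.antidiagonal (n + 1), sqrtCoeff p x.1 * sqrtCoeff p x.2 = p (n + 1) := by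
  rw [← sqrtCoeff_succ p n, Finset.Nat.sum_antidiagonal_eq_sum_range_succ_mk, Finset.sum_range_succ,
    Finset.sum_range_succ']
  simp [sqrtCoeff.eq_1]; ring

theorem sqrtCoeff_eq_zero {p : ℕ → ℂ} {n : ℕ} (h : ∀ i, 1 ≤ i → i ≤ n → p i = 0) :
    ∀ i, 1 ≤ i → i ≤ n → sqrtCoeff p i = 0 := by
  intro i
  induction i using Nat.strong_induction_on with
  | _ i ih =>
    intro h1 h2
    obtain ⟨j, rfl⟩ := Nat.exists_eq_add_of_le' h1
    have := sqrtCoeff_succ p j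
    rw [h _ h1 h2, Finset.sum_eq_zero, add_zero] at this
    · simpa using this
    · intro l hl
      rw [Finset.mem_range] at hl
      rw [ih (l + 1) (by omega) (by omega) (by omega), zero_mul]

/-- The polynomial part of the square root at infinity of a monic polynomial of degree
`2 (k + 1)`. -/
theorem Polynomial.exists_sqrt {P : Polynomial ℂ} {k : ℕ} (hP : P.Monic)
    (hPd : P.natDegree = 2 * (k + 1)) :
    ∃ q : Polynomial ℂ, q.Monic ∧ q.natDegree = k + 1 ∧ (P - q ^ 2).natDegree ≤ k ∧
      (P - q ^ 2).coeff k = 2 * sqrtCoeff (fun i => P.coeff (2 * (k + 1) - i)) (k + 2) := by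
  set p : ℕ → ℂ := fun i => P.coeff (2 * (k + 1) - i) with hp
  set q₀ : Polynomial ℂ := ∑ i ∈ Finset.range (k + 2), monomial i (sqrtCoeff p i) with hq₀
  have hc : ∀ i, q₀.coeff i = if i < k + 2 then sqrtCoeff p i else 0 := by
    intro i
    simp [hq₀, finsetSum_coeff, coeff_monomial]
  have hq₀d : q₀.natDegree ≤ k + 1 := by
    refine natDegree_le_iff_coeff_eq_zero.2 fun n hn => ?_
    rw [hc, if_neg (by omega)]
  set q := reflect (k + 1) q₀ with hq
  have hqtop : q.coeff (k + 1) = 1 := by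
    rw [hq, coeff_reflect, revAt_le le_rfl, hc]; simp [sqrtCoeff]
  have hqle : q.natDegree ≤ k + 1 := by
    refine natDegree_le_iff_coeff_eq_zero.2 fun n hn => ?_
    rw [hq, coeff_reflect, revAt_eq_self_of_lt hn, hc, if_neg (by omega)]
  have hqd : q.natDegree = k + 1 :=
    le_antisymm hqle (le_natDegree_of_ne_zero (by rw [hqtop]; exact one_ne_zero))
  have hsq : q ^ 2 = reflect ((k + 1) + (k + 1)) (q₀ * q₀) := by
    rw [reflect_mul _ _ hq₀d hq₀d, sq]
  have hcoeff : ∀ i, i ≤ 2 * (k + 1) →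
      (q ^ 2).coeff (2 * (k + 1) - i) = (q₀ * q₀).coeff i := by
    intro i hi
    rw [hsq, coeff_reflect, revAt_le (by omega)]
    congr 1; omega
  have hle : ∀ i, i ≤ k + 1 → (q₀ * q₀).coeff i = p i := by
    intro i hi
    rw [coeff_mul]
    rcases i with _ | i
    · have : P.coeff (2 * (k + 1)) = 1 := by rw [← hPd]; exact hP
      simp [hc, sqrtCoeff, hp, this]
    · rw [← sum_antidiagonal_sqrtCoeff p i]
      refine Finset.sum_congr rfl fun x hx => ?_
      rw [Finset.HasAntidiagonal.mem_antidiagonal] at hx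
      rw [hc, hc, if_pos (by omega), if_pos (by omega)]
  have htop : (q₀ * q₀).coeff (k + 2) = p (k + 2) - 2 * sqrtCoeff p (k + 2) := by
    rw [← sqrtCoeff_succ p (k + 1), coeff_mul, Finset.Nat.sum_antidiagonal_eq_sum_range_succ_mk,
      Finset.sum_range_succ, Finset.sum_range_succ', add_sub_cancel_left]
    simp only [hc, Nat.sub_zero, lt_irrefl, if_false, mul_zero, zero_mul, add_zero]
    refine Finset.sum_congr rfl fun i hi => ?_
    rw [Finset.mem_range] at hi
    rw [if_pos (by omega), if_pos (by omega)]
    congr 2; omega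
  refine ⟨q, ?_, hqd, ?_, ?_⟩
  · rw [Monic, leadingCoeff, hqd, hqtop]
  · refine natDegree_le_iff_coeff_eq_zero.2 fun n hn => ?_
    rw [coeff_sub]
    rcases le_or_gt n (2 * (k + 1)) with h | h
    · obtain ⟨i, hi, rfl⟩ : ∃ i, i ≤ 2 * (k + 1) ∧ n = 2 * (k + 1) - i :=
        ⟨2 * (k + 1) - n, by omega, by omega⟩
      rw [hcoeff i hi, hle i (by omega)]
      simp [hp]
    · rw [coeff_eq_zero_of_natDegree_lt (by omega), coeff_eq_zero_of_natDegree_lt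
        (natDegree_pow_le.trans_lt (by rw [hqd]; omega)), sub_zero]
  · have : k = 2 * (k + 1) - (k + 2) := by omega
    rw [coeff_sub]
    nth_rw 2 [this]
    rw [hcoeff _ (by omega), htop, hp]
    have h3 : 2 * (k + 1) - (k + 2) = k := by omega
    simp only [h3]; ring

/-- `Pol d α - lam` as a polynomial. -/
noncomputable def potential (d : ℕ) (α : Fin (d - 1) → ℂ) (lam : ℂ) : Polynomial ℂ :=
  Polynomial.X ^ d + (∑ i : Fin (d - 1), Polynomial.C (α i) * Polynomial.X ^ ((i : ℕ) + 1)
    - Polynomial.C lam)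

theorem eval_potential (d : ℕ) (α : Fin (d - 1) → ℂ) (lam z : ℂ) :
    (potential d α lam).eval z = Pol d α z - lam := by
  simp [potential, Pol, Polynomial.eval_finsetSum, add_sub_assoc]

theorem degree_potential_sub_lt {d : ℕ} (hd : 0 < d) (α : Fin (d - 1) → ℂ) (lam : ℂ) :
    (∑ i : Fin (d - 1), Polynomial.C (α i) * Polynomial.X ^ ((i : ℕ) + 1)
      - Polynomial.C lam).degree < d := by
  rw [Polynomial.degree_lt_iff_coeff_zero]
  intro m hm
  simp only [Polynomial.coeff_sub, Polynomial.finsetSum_coeff, Polynomial.coeff_C_mul,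
    Polynomial.coeff_X_pow, Polynomial.coeff_C]
  rw [if_neg (by omega), sub_zero]
  refine Finset.sum_eq_zero fun i _ => ?_
  rw [if_neg (by have := i.2; omega), mul_zero]

theorem monic_potential {d : ℕ} (hd : 0 < d) (α : Fin (d - 1) → ℂ) (lam : ℂ) :
    (potential d α lam).Monic :=
  Polynomial.monic_X_pow_add (degree_potential_sub_lt hd α lam)

theorem natDegree_potential {d : ℕ} (hd : 0 < d) (α : Fin (d - 1) → ℂ) (lam : ℂ) :
    (potential d α lam).natDegree = d := by
  have h : (potential d α lam).degree = d := by
    rw [potential, Polynomial.degree_add_eq_left_of_degree_lt, Polynomial.degree_X_pow]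
    rw [Polynomial.degree_X_pow]
    exact degree_potential_sub_lt hd α lam
  exact Polynomial.natDegree_eq_of_degree_eq_some h

theorem continuous_coeff_potential (d m : ℕ) :
    Continuous fun x : (Fin (d - 1) → ℂ) × ℂ => (potential d x.1 x.2).coeff m := by
  simp only [potential, Polynomial.coeff_add, Polynomial.coeff_sub, Polynomial.finsetSum_coeff,
    Polynomial.coeff_C_mul, Polynomial.coeff_C]
  refine continuous_const.add (Continuous.sub (continuous_finsetSum _ fun i _ => by fun_prop) ?_)
  split_ifs <;> fun_prop

theorem exists_potential_eq (k : ℕ) (c : ℂ) :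
    ∃ (α : Fin (2 * (k + 1) - 1) → ℂ) (lam : ℂ), potential (2 * (k + 1)) α lam =
      Polynomial.X ^ (2 * (k + 1)) + Polynomial.C c * Polynomial.X ^ k := by
  rcases k with _ | k
  · exact ⟨0, -c, by simp [potential]⟩
  · refine ⟨Pi.single ⟨k, by omega⟩ c, 0, ?_⟩
    rw [potential, Finset.sum_eq_single ⟨k, by omega⟩]
    · simp
    · intro i _ hi
      simp [Pi.single_eq_of_ne hi]
    · simp

/-- Twice the coefficient of `z⁻¹` in the square root of `Pol (2 (k + 1)) α - lam` at infinity. -/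
noncomputable def residueAtInfinity (k : ℕ) (x : (Fin (2 * (k + 1) - 1) → ℂ) × ℂ) : ℂ :=
  2 * sqrtCoeff (fun i => (potential (2 * (k + 1)) x.1 x.2).coeff (2 * (k + 1) - i)) (k + 2)

theorem continuous_residueAtInfinity (k : ℕ) : Continuous (residueAtInfinity k) :=
  continuous_const.mul ((continuous_sqrtCoeff _).comp
    (continuous_pi fun _ => continuous_coeff_potential _ _))

theorem residueAtInfinity_of_potential_eq {k : ℕ} {α : Fin (2 * (k + 1) - 1) → ℂ} {lam c : ℂ}
    (h : potential (2 * (k + 1)) α lam =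
      Polynomial.X ^ (2 * (k + 1)) + Polynomial.C c * Polynomial.X ^ k) :
    residueAtInfinity k (α, lam) = c := by
  rw [residueAtInfinity]
  simp only [h]
  set p : ℕ → ℂ := fun i => (Polynomial.X ^ (2 * (k + 1)) +
    Polynomial.C c * Polynomial.X ^ k : Polynomial ℂ).coeff (2 * (k + 1) - i) with hp
  have hz := sqrtCoeff_eq_zero (p := p) (n := k + 1) fun i h1 h2 => by
    simp only [hp, Polynomial.coeff_add, Polynomial.coeff_C_mul, Polynomial.coeff_X_pow]
    rw [if_neg (by omega), if_neg (by omega), mul_zero, add_zero]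
  have h1 := sqrtCoeff_succ p (k + 1)
  rw [Finset.sum_eq_zero, add_zero] at h1
  · rw [h1]
    simp only [hp, Polynomial.coeff_add, Polynomial.coeff_C_mul, Polynomial.coeff_X_pow]
    rw [if_neg (by omega), if_pos (by omega), mul_one, zero_add]
  · intro i hi
    rw [Finset.mem_range] at hi
    rw [hz (i + 1) (by omega) (by omega), zero_mul]

theorem dirIn_two_mul_iff {m : ℕ} (hm : 0 < m) (i : ℕ) (θ : ℝ) :
    DirIn (2 * m) (2 * i) θ ↔ |m * θ - i * (2 * Real.pi)| < Real.pi / 2 := by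
  have hm' : (0 : ℝ) < m := by exact_mod_cast hm
  have h : m * θ - i * (2 * Real.pi) =
      m * (θ - 2 * Real.pi * (2 * i : ℕ) / (2 * m : ℕ)) := by
    push_cast; field_simp
  have h2 : Real.pi / 2 = m * (Real.pi / (2 * m : ℕ)) := by
    push_cast; field_simp
  rw [DirIn, h, abs_mul, abs_of_pos hm', h2, mul_lt_mul_iff_right₀ hm']

theorem cos_pos_of_dirIn {m i : ℕ} (hm : 0 < m) {θ : ℝ} (h : DirIn (2 * m) (2 * i) θ) :
    0 < Real.cos (m * θ) := by
  rw [dirIn_two_mul_iff hm, abs_lt] at h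
  rw [← Real.cos_sub_nat_mul_two_pi _ i]
  exact Real.cos_pos_of_mem_Ioo ⟨by linarith [h.1], h.2⟩

theorem tendsto_of_subdominant {m : ℕ} (hm : 0 < m) {y : ℂ → ℂ}
    (h : ∀ i < m, Subdominant (2 * m) (2 * i) y) {θ : ℝ} (hθ : 0 < Real.cos (m * θ)) :
    Tendsto (fun r : ℝ => y (r * exp (θ * I))) atTop (𝓝 0) := by
  have hm' : (0 : ℝ) < m := by exact_mod_cast hm
  set j : ℤ := toIocDiv Real.two_pi_pos (-Real.pi) (m * θ) with hj
  have hmem := sub_toIocDiv_zsmul_mem_Ioc Real.two_pi_pos (-Real.pi) (m * θ)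
  rw [← hj, zsmul_eq_mul] at hmem
  have habs : |m * θ - j * (2 * Real.pi)| < Real.pi / 2 := by
    by_contra! hc
    rw [← Real.cos_sub_int_mul_two_pi _ j, ← Real.cos_abs] at hθ
    refine absurd hθ (not_lt.2 (Real.cos_nonpos_of_pi_div_two_le_of_le hc ?_))
    have : |m * θ - j * (2 * Real.pi)| ≤ Real.pi := abs_le.2 ⟨hmem.1.le, by linarith [hmem.2]⟩
    linarith [Real.pi_pos]
  have hm0 : (m : ℤ) ≠ 0 := by exact_mod_cast hm.ne'
  obtain ⟨i, hi⟩ := Int.eq_ofNat_of_zero_le (Int.emod_nonneg j hm0)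
  have him : i < m := by
    have := Int.emod_lt_of_pos j (by exact_mod_cast hm : (0 : ℤ) < m)
    omega
  set s : ℤ := j / m
  have hjs : (j : ℝ) = i + m * s := by
    have := Int.emod_add_mul_ediv j m
    rw [hi] at this
    exact_mod_cast this.symm
  have key := h i him (θ - s * (2 * Real.pi)) ((dirIn_two_mul_iff hm i _).2 (by
    rw [hjs] at habs
    convert habs using 2
    ring))
  have hexp : exp ((θ - s * (2 * Real.pi) : ℝ) * I) = exp (θ * I) := by
    rw [← Complex.exp_periodic.sub_int_mul_eq (x := θ * I) s]
    congr 1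
    push_cast; ring
  simpa only [hexp] using key

theorem exists_residueAtInfinity_eq {k : ℕ} {α : Fin (2 * (k + 1) - 1) → ℂ} {lam : ℂ}
    {y : ℂ → ℂ} (hy0 : y ≠ 0) (hy : IsSol (2 * (k + 1)) α lam y)
    (hsub : ∀ i < k + 2, Subdominant (2 * (k + 2)) (2 * i) y) :
    ∃ m : ℕ, residueAtInfinity k (α, lam) = -(k + 1) - 2 * m := by
  obtain ⟨q, hq, hqd, hr, hrk⟩ := Polynomial.exists_sqrt (k := k)
    (monic_potential (by omega) α lam) (natDegree_potential (by omega) α lam)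
  have hdq : (Polynomial.derivative q).natDegree ≤ k := by
    have := Polynomial.natDegree_derivative_le q
    omega
  obtain ⟨m, hm⟩ := exists_coeff_eq_of_subdominant hq hqd
    (S := potential (2 * (k + 1)) α lam - q ^ 2 + Polynomial.derivative q)
    (Polynomial.natDegree_add_le_of_degree_le hr hdq) hy.1 hy0
    (fun z => by
      rw [hy.2, ← eval_potential]
      simp only [Polynomial.eval_add, Polynomial.eval_sub, Polynomial.eval_pow]
      ring)
    (fun θ hθ => tendsto_of_subdominant (by omega) hsub hθ)
  refine ⟨m, ?_⟩
  have hlead : q.coeff (k + 1) = 1 := by rw [← hqd]; exact hq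
  rw [Polynomial.coeff_add, hrk, Polynomial.coeff_derivative, hlead] at hm
  rw [residueAtInfinity]
  linear_combination hm

theorem hasDerivAt_exp_neg_pow_div (m : ℕ) (z : ℂ) :
    HasDerivAt (fun z : ℂ => exp (-z ^ (m + 1) / (m + 1 : ℕ)))
      (-z ^ m * exp (-z ^ (m + 1) / (m + 1 : ℕ))) z := by
  have hm : ((m + 1 : ℕ) : ℂ) ≠ 0 := Nat.cast_ne_zero.2 (by omega)
  refine ((hasDerivAt_pow (m + 1) z).neg.div_const ((m + 1 : ℕ) : ℂ)).cexp.congr_deriv ?_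
  rw [Nat.add_sub_cancel, neg_div, mul_div_cancel_left₀ _ hm, mul_comm]
  rfl

theorem tendsto_pow_mul_exp_neg_pow (j : ℕ) {m : ℕ} (hm : 0 < m) {θ : ℝ}
    (hθ : 0 < Real.cos (m * θ)) :
    Tendsto (fun r : ℝ => ((r : ℂ) * exp (θ * I)) ^ j *
      exp (-((r : ℂ) * exp (θ * I)) ^ m / m)) atTop (𝓝 0) := by
  have hm' : (0 : ℝ) < m := by exact_mod_cast hm
  have hb : 0 < Real.cos (m * θ) / m := div_pos hθ hm'
  refine squeeze_zero_norm' ?_ (tendsto_rpow_mul_exp_neg_mul_atTop_nhds_zero j _ hb)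
  filter_upwards [eventually_ge_atTop 1] with r hr
  have hr0 : 0 ≤ r := by linarith
  have hre : (-((r : ℂ) * exp (θ * I)) ^ m / m).re = -(Real.cos (m * θ) / m) * r ^ m := by
    rw [mul_pow, ← Complex.exp_nat_mul, ← mul_assoc]
    have : exp ((m : ℂ) * θ * I) = Real.cos (m * θ) + Real.sin (m * θ) * I := by
      rw [Complex.exp_mul_I]; push_cast; rfl
    rw [this, ← Complex.ofReal_pow, ← Complex.ofReal_natCast, Complex.div_ofReal_re,
      Complex.neg_re, Complex.re_ofReal_mul]
    simp only [add_re, ofReal_re, mul_re, I_re, I_im, ofReal_im]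
    ring
  rw [norm_mul, norm_pow, norm_mul, Complex.norm_exp_ofReal_mul_I, mul_one, Complex.norm_real,
    Real.norm_of_nonneg hr0, Complex.norm_exp, hre, Real.rpow_natCast]
  have : r ≤ r ^ m := le_self_pow₀ hr hm.ne'
  exact mul_le_mul_of_nonneg_left (Real.exp_le_exp.2
    (mul_le_mul_of_nonpos_left this (neg_nonpos.2 hb.le))) (by positivity)

theorem exists_isSol_residueAtInfinity_eq (k : ℕ) {j : ℕ} (hj : j < 2) :
    ∃ (α : Fin (2 * (k + 1) - 1) → ℂ) (lam : ℂ) (y : ℂ → ℂ), y ≠ 0 ∧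
      IsSol (2 * (k + 1)) α lam y ∧ (∀ i, Subdominant (2 * (k + 2)) (2 * i) y) ∧
      residueAtInfinity k (α, lam) = -(k + 1 + 2 * j) := by
  obtain ⟨α, lam, h⟩ := exists_potential_eq k (-(k + 1 + 2 * j))
  set e : ℂ → ℂ := fun z => exp (-z ^ (k + 1 + 1) / (k + 1 + 1 : ℕ)) with he
  have hde : ∀ z, HasDerivAt e (-z ^ (k + 1) * e z) z := hasDerivAt_exp_neg_pow_div (k + 1)
  have hd1 : ∀ z, HasDerivAt (fun z => z ^ j * e z) ((j - z ^ (k + 1 + j)) * e z) z := by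
    intro z
    refine ((hasDerivAt_pow j z).mul (hde z)).congr_deriv ?_
    interval_cases j
    · simp
    · simp; ring
  refine ⟨α, lam, fun z => z ^ j * e z, ?_, ⟨fun z => (hd1 z).differentiableAt, fun z => ?_⟩, ?_,
    residueAtInfinity_of_potential_eq h⟩
  · intro h0
    have := congrFun h0 1
    simp [he] at this
  · rw [funext fun z => (hd1 z).deriv, ← eval_potential, h]
    refine (((hasDerivAt_const z (j : ℂ)).sub (hasDerivAt_pow (k + 1 + j) z)).mul
      (hde z) |>.congr_deriv ?_).deriv
    interval_cases j <;> simp <;> ring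
  · intro i θ hθ
    exact tendsto_pow_mul_exp_neg_pow j (by omega) (cos_pos_of_dirIn (by omega) hθ)

theorem stmt4 (d : ℕ) (hd : 2 ≤ d) (hev : Even d) (n : ℕ) (hn : n = d + 2) :
    ¬ IsPreconnected {p : (Fin (d - 1) → ℂ) × ℂ |
      ∃ y : ℂ → ℂ, y ≠ 0 ∧ IsSol d p.1 p.2 y ∧
        ∀ i : ℕ, i < n / 2 → Subdominant n (2 * i) y} := by
  obtain ⟨k, rfl⟩ : ∃ k, d = 2 * (k + 1) := by
    obtain ⟨l, rfl⟩ := hev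
    exact ⟨l - 1, by omega⟩
  obtain rfl : n = 2 * (k + 2) := by omega
  rw [Nat.mul_div_cancel_left _ two_pos]
  intro hpre
  have hord := (hpre.image _ (Complex.continuous_re.comp
    (continuous_residueAtInfinity k)).continuousOn).ordConnected
  have hex : ∀ j : ℕ, j < 2 → (-(k + 1 + 2 * j) : ℝ) ∈ (re ∘ residueAtInfinity k) ''
      {p : (Fin (2 * (k + 1) - 1) → ℂ) × ℂ | ∃ y : ℂ → ℂ, y ≠ 0 ∧
        IsSol (2 * (k + 1)) p.1 p.2 y ∧
          ∀ i : ℕ, i < k + 2 → Subdominant (2 * (k + 2)) (2 * i) y} := by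
    intro j hj
    obtain ⟨α, lam, y, hy0, hy, hsub, hres⟩ := exists_isSol_residueAtInfinity_eq k hj
    refine ⟨(α, lam), ⟨y, hy0, hy, fun i _ => hsub i⟩, ?_⟩
    rw [Function.comp_apply, hres]
    simp
  have hmid : (-(k + 2) : ℝ) ∈ Set.Icc (-(k + 1 + 2 * (1 : ℕ)) : ℝ) (-(k + 1 + 2 * (0 : ℕ))) :=
    ⟨by push_cast; linarith, by push_cast; linarith⟩
  obtain ⟨⟨α, lam⟩, ⟨y, hy0, hy, hsub⟩, hx⟩ :=
    hord.out (hex 1 (by norm_num)) (hex 0 (by norm_num)) hmid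
  obtain ⟨m, hm⟩ := exists_residueAtInfinity_eq hy0 hy hsub
  rw [Function.comp_apply, hm] at hx
  simp at hx
  have h2 : (1 : ℝ) = 2 * m := by linarith
  have h3 : 1 = 2 * m := by exact_mod_cast h2
  omega
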